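/- Let n = dim_F(U) and let {f̂_0, f̂_1, …, f̂_{n−1}} ⊆ S[U]^G be a homogeneous system of parameters of S[U]^G with f̂_0 = f̂. Then the images {β(f̂_1), …, β(f̂_{n−1})} ⊆ S[V]^G form a homogeneous system of parameters of S[V]^G. -/

import Mathlib

set_option synthInstance.maxHeartbeats 1000000
set_option maxHeartbeats 1000000

open MvPolynomial

/-- The algebra endomorphism of the polynomial ring induced by a matrix acting (on the
right) on the coefficient row vectors of linear forms. -/
noncomputable def matSub {F : Type*} [CommRing F] {n : ℕ} (M : Matrix (Fin n) (Fin n) F) :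
    MvPolynomial (Fin n) F →ₐ[F] MvPolynomial (Fin n) F :=
  aeval (fun i => ∑ j, M i j • X j)

/-- The invariant ring of a matrix representation. -/
noncomputable def invariants {F : Type*} [CommRing F] {n : ℕ} {G : Type*} [Group G]
    (ρ : G →* GL (Fin n) F) : Subalgebra F (MvPolynomial (Fin n) F) where
  carrier := {p | ∀ σ : G, matSub ((ρ σ : Matrix (Fin n) (Fin n) F)) p = p}
  mul_mem' := fun ha hb σ => by rw [map_mul, ha σ, hb σ]
  add_mem' := fun ha hb σ => by rw [map_add, ha σ, hb σ]
  one_mem' := fun σ => map_one _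
  zero_mem' := fun σ => map_zero _
  algebraMap_mem' := fun r σ => AlgHom.commutes _ r

/-- The algebra homomorphism `S[U] → S[V]` induced by a linear map `U → V` given by a
(rectangular) matrix acting on the right on row vectors. -/
noncomputable def betaAlg {F : Type*} [CommRing F] {m : ℕ}
    (B : Matrix (Fin (m + 1)) (Fin m) F) :
    MvPolynomial (Fin (m + 1)) F →ₐ[F] MvPolynomial (Fin m) F :=
  aeval (fun i => ∑ j, B i j • X j)

/-- The linear form in `S[U]₁` corresponding to a vector of `U`. -/
noncomputable def linForm {F : Type*} [CommRing F] {n : ℕ} (v : Fin n → F) :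
    MvPolynomial (Fin n) F :=
  ∑ i, v i • X i

/-- A homogeneous system of parameters of an invariant ring `R ⊆ F[X₁,…,Xₙ]`: a family of
`n` algebraically independent homogeneous elements of positive degree over whose generated
polynomial subalgebra `R` is a finitely generated module. -/
def IsHSOP {F : Type*} [Field F] {n k : ℕ} (R : Subalgebra F (MvPolynomial (Fin n) F))
    (f : Fin k → R) : Prop :=
  AlgebraicIndependent F f ∧
  (∀ i, ∃ d : ℕ, 0 < d ∧ (f i : MvPolynomial (Fin n) F).IsHomogeneous d) ∧
  Module.Finite (Algebra.adjoin F (Set.range f)) R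

/-!
The system `f̂₀, …, f̂ₙ₋₁` generates a subalgebra over which `S[U]^G`, and hence `S[U]`, is finite.
Applying the surjection `β : S[U] → S[V]`, under which `f̂₀` vanishes, shows that `S[V]` is finite
over `F[β(f̂₁), …, β(f̂ₙ₋₁)]`. Since this algebra is Noetherian, the submodule `S[V]^G` of `S[V]`
is finite over it as well, and since `S[V]` has transcendence degree `n - 1`, the `n - 1` generators
are algebraically independent.
-/

section FiniteAeval

variable {F A : Type*} [CommRing F] [CommRing A] [Algebra F A]

theorem finite_aeval_iff_finite_adjoin_range {ι : Type*} (f : ι → A) :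
    (aeval f : MvPolynomial ι F →ₐ[F] A).Finite ↔
      Module.Finite (Algebra.adjoin F (Set.range f)) A := by
  rw [Algebra.adjoin_range_eq_range_aeval]
  have hval : (aeval f).range.val.Finite ↔ Module.Finite (aeval f : _ →ₐ[F] A).range A :=
    RingHom.finite_algebraMap
  rw [← hval]
  exact ⟨fun h ↦ AlgHom.Finite.of_comp_finite (f := (aeval f).rangeRestrict) h,
    fun h ↦ h.comp (.of_surjective _ (aeval f).rangeRestrict_surjective)⟩

theorem finite_aeval_succ_of_zero {k : ℕ} {f : Fin (k + 1) → A} (h0 : f 0 = 0)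
    (hf : (aeval f : MvPolynomial (Fin (k + 1)) F →ₐ[F] A).Finite) :
    (aeval fun i ↦ f i.succ : MvPolynomial (Fin k) F →ₐ[F] A).Finite := by
  have hfactor : (aeval fun i ↦ f i.succ).comp (aeval (Fin.cons 0 X : Fin (k + 1) → _)) =
      (aeval f : MvPolynomial (Fin (k + 1)) F →ₐ[F] A) := by
    ext i
    cases i using Fin.cases <;> simp [h0]
  exact .of_comp_finite (hfactor ▸ hf)

theorem finite_of_finite_comp_of_injective {B C : Type*} [CommRing B] [CommRing C]
    [Algebra F B] [Algebra F C] [IsNoetherianRing A] {φ : A →ₐ[F] B} {ψ : B →ₐ[F] C}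
    (hψ : Function.Injective ψ) (h : (ψ.comp φ).Finite) : φ.Finite := by
  algebraize [φ.toRingHom, (ψ.comp φ).toRingHom]
  have : Module.Finite A C := h
  let ψ' : B →ₗ[A] C :=
    { ψ.toAddMonoidHom with map_smul' := fun a b ↦ map_mul ψ (φ a) b }
  have : IsNoetherian A C := isNoetherian_of_isNoetherianRing_of_finite A C
  exact Module.Finite.of_injective ψ' hψ

theorem algebraicIndependent_of_finite_aeval {F : Type*} [Field F] {ι : Type*} [Finite ι]
    {g : ι → MvPolynomial ι F} (hg : (aeval g : _ →ₐ[F] MvPolynomial ι F).Finite) :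
    AlgebraicIndependent F g := by
  have := (finite_aeval_iff_finite_adjoin_range g).1 hg
  refine (Algebra.IsAlgebraic.isTranscendenceBasis_of_lift_le_trdeg_of_finite F g ?_).1
  simp [MvPolynomial.trdeg_of_isDomain]

end FiniteAeval

section LinearSubstitution

variable {F : Type*} [CommRing F] {n m : ℕ}

theorem toMvPolynomial_apply_eq_linForm {ι : Type*} (M : Matrix ι (Fin n) F) (i : ι) :
    M.toMvPolynomial i = linForm (M i) := by
  simp [Matrix.toMvPolynomial, linForm, X, smul_monomial]

theorem matSub_eq_bind₁ (M : Matrix (Fin n) (Fin n) F) : matSub M = bind₁ M.toMvPolynomial := by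
  simp only [matSub, bind₁, funext (toMvPolynomial_apply_eq_linForm M), linForm]

theorem betaAlg_eq_bind₁ (B : Matrix (Fin (m + 1)) (Fin m) F) :
    betaAlg B = bind₁ B.toMvPolynomial := by
  simp only [betaAlg, bind₁, funext (toMvPolynomial_apply_eq_linForm B), linForm]

theorem bind₁_toMvPolynomial_bind₁_toMvPolynomial {ι κ τ : Type*} [Fintype κ] [Fintype τ]
    (M : Matrix ι κ F) (N : Matrix κ τ F) (p : MvPolynomial ι F) :
    bind₁ N.toMvPolynomial (bind₁ M.toMvPolynomial p) = bind₁ (M * N).toMvPolynomial p := by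
  rw [bind₁_bind₁, funext (M.toMvPolynomial_mul N)]

theorem matSub_one (p : MvPolynomial (Fin n) F) : matSub 1 p = p := by
  rw [matSub_eq_bind₁, Matrix.toMvPolynomial_one, bind₁_X_left, AlgHom.id_apply]

theorem matSub_matSub (M N : Matrix (Fin n) (Fin n) F) (p : MvPolynomial (Fin n) F) :
    matSub N (matSub M p) = matSub (M * N) p := by
  simp only [matSub_eq_bind₁, bind₁_toMvPolynomial_bind₁_toMvPolynomial]

theorem matSub_betaAlg {M : Matrix (Fin (m + 1)) (Fin (m + 1)) F} {N : Matrix (Fin m) (Fin m) F}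
    {B : Matrix (Fin (m + 1)) (Fin m) F} (h : M * B = B * N) (p : MvPolynomial (Fin (m + 1)) F) :
    matSub N (betaAlg B p) = betaAlg B (matSub M p) := by
  simp only [matSub_eq_bind₁, betaAlg_eq_bind₁, bind₁_toMvPolynomial_bind₁_toMvPolynomial, h]

theorem betaAlg_linForm (B : Matrix (Fin (m + 1)) (Fin m) F) (v : Fin (m + 1) → F) :
    betaAlg B (linForm v) = linForm (Matrix.vecMul v B) := by
  have h := (Matrix.replicateRow Unit v).toMvPolynomial_mul B ()
  rw [← Matrix.replicateRow_vecMul] at h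
  simp only [toMvPolynomial_apply_eq_linForm] at h
  rw [betaAlg_eq_bind₁]
  exact h.symm

theorem linForm_zero : linForm (0 : Fin n → F) = 0 := by
  simp [linForm]

theorem linForm_single_one (i : Fin n) : linForm (Pi.single i (1 : F)) = X i := by
  simp [linForm, Pi.single_apply]

theorem betaAlg_surjective {B : Matrix (Fin (m + 1)) (Fin m) F}
    (hB : Function.Surjective fun u ↦ Matrix.vecMul u B) : Function.Surjective (betaAlg B) := by
  rw [← AlgHom.range_eq_top, ← top_le_iff, ← adjoin_range_X, Algebra.adjoin_le_iff]
  rintro _ ⟨i, rfl⟩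
  obtain ⟨u, hu⟩ := hB (Pi.single i 1)
  exact ⟨linForm u, by rw [← linForm_single_one, ← hu]; exact betaAlg_linForm B u⟩

theorem isHomogeneous_betaAlg (B : Matrix (Fin (m + 1)) (Fin m) F)
    {p : MvPolynomial (Fin (m + 1)) F} {d : ℕ} (hp : p.IsHomogeneous d) :
    (betaAlg B p).IsHomogeneous d := by
  rw [betaAlg_eq_bind₁, ← one_mul d]
  exact hp.aeval _ B.toMvPolynomial_isHomogeneous

end LinearSubstitution

section Invariants

variable {F : Type*} [CommRing F] {G : Type*} [Group G] {n m : ℕ}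

/-- The action of `G` on the polynomial ring by linear substitutions. Matrices act on the right
of row vectors, so this is a right action, encoded as a left action of `Gᵐᵒᵖ`. -/
noncomputable abbrev substAction (ρ : G →* GL (Fin n) F) :
    MulSemiringAction Gᵐᵒᵖ (MvPolynomial (Fin n) F) where
  smul σ := matSub (ρ σ.unop : Matrix (Fin n) (Fin n) F)
  one_smul p := by
    change matSub (ρ 1 : Matrix (Fin n) (Fin n) F) p = p
    rw [map_one, Units.val_one, matSub_one]
  mul_smul σ τ p := by
    change matSub (ρ (τ.unop * σ.unop) : Matrix (Fin n) (Fin n) F) p = matSub _ (matSub _ p)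
    rw [matSub_matSub, map_mul, Units.val_mul]
  smul_zero σ := map_zero (matSub _)
  smul_add σ := map_add (matSub _)
  smul_one σ := map_one (matSub _)
  smul_mul σ := map_mul (matSub _)

theorem finite_over_invariants [Finite G] (ρ : G →* GL (Fin n) F) :
    Module.Finite (invariants ρ) (MvPolynomial (Fin n) F) := by
  let := substAction ρ
  have : Finite Gᵐᵒᵖ := .of_equiv G MulOpposite.opEquiv
  have : Algebra.IsInvariant (invariants ρ) (MvPolynomial (Fin n) F) Gᵐᵒᵖ :=
    ⟨fun p hp ↦ ⟨⟨p, fun σ ↦ hp (.op σ)⟩, rfl⟩⟩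
  have : Algebra.IsIntegral (invariants ρ) (MvPolynomial (Fin n) F) :=
    Algebra.IsInvariant.isIntegral _ _ Gᵐᵒᵖ
  have : Algebra.FiniteType (invariants ρ) (MvPolynomial (Fin n) F) :=
    .of_restrictScalars_finiteType F _ _
  exact Algebra.IsIntegral.finite

theorem betaAlg_mem_invariants {ρU : G →* GL (Fin (m + 1)) F} {ρV : G →* GL (Fin m) F}
    {B : Matrix (Fin (m + 1)) (Fin m) F}
    (hequiv : ∀ σ : G, (ρU σ : Matrix (Fin (m + 1)) (Fin (m + 1)) F) * B
      = B * (ρV σ : Matrix (Fin m) (Fin m) F))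
    {p : MvPolynomial (Fin (m + 1)) F} (hp : p ∈ invariants ρU) :
    betaAlg B p ∈ invariants ρV := fun σ ↦ by
  rw [matSub_betaAlg (hequiv σ), hp σ]

end Invariants

namespace IsHSOP

variable {F : Type*} [Field F] {n k m : ℕ}

theorem finite_aeval_coe {R : Subalgebra F (MvPolynomial (Fin n) F)}
    [Module.Finite R (MvPolynomial (Fin n) F)] {f : Fin k → R} (hf : IsHSOP R f) :
    (aeval fun i ↦ (f i : MvPolynomial (Fin n) F) :
      MvPolynomial (Fin k) F →ₐ[F] MvPolynomial (Fin n) F).Finite := by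
  have hval : R.val.Finite := RingHom.finite_algebraMap.2 ‹_›
  have hcomp := hval.comp ((finite_aeval_iff_finite_adjoin_range f).2 hf.2.2)
  rwa [comp_aeval] at hcomp

theorem of_finite_aeval_coe {R : Subalgebra F (MvPolynomial (Fin n) F)} {g : Fin n → R}
    (hdeg : ∀ i, ∃ d : ℕ, 0 < d ∧ (g i : MvPolynomial (Fin n) F).IsHomogeneous d)
    (hfin : (aeval fun i ↦ (g i : MvPolynomial (Fin n) F) :
      MvPolynomial (Fin n) F →ₐ[F] MvPolynomial (Fin n) F).Finite) :
    IsHSOP R g := by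
  have hindep : AlgebraicIndependent F (R.val ∘ g) := algebraicIndependent_of_finite_aeval hfin
  refine ⟨hindep.of_comp R.val, hdeg, (finite_aeval_iff_finite_adjoin_range g).1 ?_⟩
  refine finite_of_finite_comp_of_injective (ψ := R.val) Subtype.val_injective ?_
  rwa [comp_aeval]

theorem betaAlg_succ {R : Subalgebra F (MvPolynomial (Fin (m + 1)) F)}
    [Module.Finite R (MvPolynomial (Fin (m + 1)) F)] {R' : Subalgebra F (MvPolynomial (Fin m) F)}
    {B : Matrix (Fin (m + 1)) (Fin m) F} (hB : Function.Surjective (betaAlg B))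
    {f : Fin (m + 1) → R} (hf : IsHSOP R f)
    (h0 : betaAlg B (f 0 : MvPolynomial (Fin (m + 1)) F) = 0) {g : Fin m → R'}
    (hg : ∀ i, (g i : MvPolynomial (Fin m) F) = betaAlg B (f i.succ)) :
    IsHSOP R' g := by
  refine of_finite_aeval_coe (fun i ↦ ?_) ?_
  · obtain ⟨d, hd, hfd⟩ := hf.2.1 i.succ
    exact ⟨d, hd, hg i ▸ isHomogeneous_betaAlg B hfd⟩
  · have hβ := (AlgHom.Finite.of_surjective (betaAlg B) hB).comp hf.finite_aeval_coe
    rw [comp_aeval] at hβ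
    simpa only [funext hg] using finite_aeval_succ_of_zero h0 hβ

end IsHSOP

theorem stmt4_general {F : Type*} [Field F] {G : Type*} [Group G] [Finite G] {m : ℕ}
    (ρU : G →* GL (Fin (m + 1)) F) (ρV : G →* GL (Fin m) F)
    (B : Matrix (Fin (m + 1)) (Fin m) F)
    (hsur : ∀ v : Fin m → F, ∃ u : Fin (m + 1) → F, Matrix.vecMul u B = v)
    (hequiv : ∀ σ : G, (ρU σ : Matrix (Fin (m + 1)) (Fin (m + 1)) F) * B
      = B * (ρV σ : Matrix (Fin m) (Fin m) F))
    (fh : Fin (m + 1) → (invariants ρU))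
    (hhsop : IsHSOP (invariants ρU) fh)
    (h0 : betaAlg B (fh 0 : MvPolynomial (Fin (m + 1)) F) = 0) :
    ∃ g : Fin m → (invariants ρV),
      (∀ i : Fin m, (g i : MvPolynomial (Fin m) F)
        = betaAlg B (fh i.succ : MvPolynomial (Fin (m + 1)) F)) ∧
      IsHSOP (invariants ρV) g := by
  have := finite_over_invariants ρU
  exact ⟨fun i ↦ ⟨betaAlg B (fh i.succ), betaAlg_mem_invariants hequiv (fh i.succ).2⟩,
    fun _ ↦ rfl, hhsop.betaAlg_succ (betaAlg_surjective hsur) h0 fun _ ↦ rfl⟩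

/-- In the situation of a split short exact sequence
`0 → U' → U →(β) V → 0` of right `FG`-modules, with `U' ≅ F` the trivial module spanned by a
`G`-fixed element `f̂ ∈ U ⊆ S[U]₁`: if `{f̂₀, f̂₁, …, f̂ₙ₋₁} ⊆ S[U]^G` (with `n = dim_F U`)
is a homogeneous system of parameters of `S[U]^G` with `f̂₀ = f̂`, then the images
`{β(f̂₁), …, β(f̂ₙ₋₁)} ⊆ S[V]^G` form a homogeneous system of parameters of `S[V]^G`. -/
theorem stmt4 {F : Type*} [Field F] {G : Type*} [Group G] [Finite G] {m : ℕ}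
    (ρU : G →* GL (Fin (m + 1)) F) (ρV : G →* GL (Fin m) F)
    (B : Matrix (Fin (m + 1)) (Fin m) F) (fhat : Fin (m + 1) → F)
    (hsur : ∀ v : Fin m → F, ∃ u : Fin (m + 1) → F, Matrix.vecMul u B = v)
    (hker : ∀ u : Fin (m + 1) → F, Matrix.vecMul u B = 0 ↔ ∃ c : F, u = c • fhat)
    (hne : fhat ≠ 0)
    (hequiv : ∀ σ : G, (ρU σ : Matrix (Fin (m + 1)) (Fin (m + 1)) F) * B
      = B * (ρV σ : Matrix (Fin m) (Fin m) F))
    (hfix : ∀ σ : G, Matrix.vecMul fhat (ρU σ : Matrix (Fin (m + 1)) (Fin (m + 1)) F) = fhat)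
    (hsplit : ∃ γ : Matrix (Fin m) (Fin (m + 1)) F, γ * B = 1 ∧
      ∀ σ : G, (ρV σ : Matrix (Fin m) (Fin m) F) * γ
        = γ * (ρU σ : Matrix (Fin (m + 1)) (Fin (m + 1)) F))
    -- a homogeneous system of parameters `{f̂₀, …, f̂ₙ₋₁}` of `S[U]^G` with `f̂₀ = f̂`:
    (fh : Fin (m + 1) → (invariants ρU))
    (hhsop : IsHSOP (invariants ρU) fh)
    (h0 : (fh 0 : MvPolynomial (Fin (m + 1)) F) = linForm fhat) :
    ∃ g : Fin m → (invariants ρV),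
      (∀ i : Fin m, (g i : MvPolynomial (Fin m) F)
        = betaAlg B (fh i.succ : MvPolynomial (Fin (m + 1)) F)) ∧
      IsHSOP (invariants ρV) g := by
  exact stmt4_general ρU ρV B hsur hequiv fh hhsop <| by
    rw [h0, betaAlg_linForm, (hker fhat).2 ⟨1, (one_smul F fhat).symm⟩, linForm_zero]
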